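/- arXiv:1001.4270 — 12 statements merged into one kernel-verified Lean document; each statement's English description precedes it below -/
import Mathlib

section
/- Let r > 0, λ > 0, p ∈ (0,1], c > 0, and let A be a real number with 0 ≤ A < c(r+λ)/(pr+λ). Set w_s = pc/(pr+λ) − A/(r+λ), w̲ = −(1−p)A/(r+λ), and q = w_s − (c−A)/r, and let B₁ > 1, B₂ < 0. Define G(x) = q·f(x) + (c−A)/r, where f(z) = (B₁(1−B₂)·z^(B₁−1) + (B₁−1)B₂·z^(B₂−1))/(B₁−B₂). Then G(1) = w_s > w̲, G is strictly decreasing on [1, ∞) with G(x) → −∞ as x → ∞, and consequently there exists a unique x > 1 with G(x) = w̲. -/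
/-!
The function `f` is a positive combination of `z ^ (B₁ - 1)`, which increases to `∞`, and of
`-z ^ (B₂ - 1)`, which increases to `0`; hence `f` is strictly increasing and unbounded on
`[1, ∞)`, with `f 1 = 1`. The upper bound on `A` says exactly that `A / (r + λ) < c / (p r + λ)`,
and both signs needed follow from it:
`q = (λ / r) (A / (r + λ) - c / (p r + λ)) < 0` and
`w_s - w̲ = p (c / (p r + λ) - A / (r + λ)) > 0`.
So `G = q f + const` decreases strictly from `w_s` to `-∞`, and the intermediate value theorem
together with injectivity gives the unique crossing of the level `w̲`.
-/

theorem f_strictMonoOn (B₁ B₂ : ℝ) (hB₁ : 1 < B₁) (hB₂ : B₂ < 0) :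
    StrictMonoOn (fun z : ℝ =>
      (B₁ * (1 - B₂) * z ^ (B₁ - 1) + (B₁ - 1) * B₂ * z ^ (B₂ - 1)) / (B₁ - B₂))
      (Set.Ici 1) := by
  intro x hx y _ hxy
  have hx0 : (0 : ℝ) < x := lt_of_lt_of_le one_pos hx
  have h1 : x ^ (B₁ - 1) < y ^ (B₁ - 1) :=
    Real.rpow_lt_rpow hx0.le hxy (by linarith)
  have h2 : y ^ (B₂ - 1) < x ^ (B₂ - 1) :=
    Real.rpow_lt_rpow_of_neg hx0 hxy (by linarith)
  have hc1 : 0 < B₁ * (1 - B₂) := mul_pos (by linarith) (by linarith)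
  have hc2 : (B₁ - 1) * B₂ < 0 := mul_neg_of_pos_of_neg (by linarith) hB₂
  exact div_lt_div_of_pos_right
    (add_lt_add (mul_lt_mul_of_pos_left h1 hc1) (mul_lt_mul_of_neg_left h2 hc2))
    (by linarith)

theorem f_tendsto_atTop (B₁ B₂ : ℝ) (hB₁ : 1 < B₁) (hB₂ : B₂ < 0) :
    Filter.Tendsto (fun z : ℝ =>
      (B₁ * (1 - B₂) * z ^ (B₁ - 1) + (B₁ - 1) * B₂ * z ^ (B₂ - 1)) / (B₁ - B₂))
      Filter.atTop Filter.atTop := by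
  have hc1 : 0 < B₁ * (1 - B₂) := mul_pos (by linarith) (by linarith)
  have h2 : Filter.Tendsto (fun z : ℝ => z ^ (B₂ - 1)) Filter.atTop (nhds 0) := by
    simpa using tendsto_rpow_neg_atTop (y := 1 - B₂) (by linarith)
  exact Filter.Tendsto.atTop_div_const (by linarith)
    (((tendsto_rpow_atTop (by linarith : 0 < B₁ - 1)).const_mul_atTop hc1).atTop_add
      (h2.const_mul ((B₁ - 1) * B₂)))

theorem f_continuousOn (B₁ B₂ : ℝ) :
    ContinuousOn (fun z : ℝ =>
      (B₁ * (1 - B₂) * z ^ (B₁ - 1) + (B₁ - 1) * B₂ * z ^ (B₂ - 1)) / (B₁ - B₂))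
      (Set.Ici 1) := by
  have hpow (s : ℝ) : ContinuousOn (fun z : ℝ => z ^ s) (Set.Ici 1) :=
    continuousOn_id.rpow_const fun z hz => Or.inl (lt_of_lt_of_le one_pos hz).ne'
  exact (((hpow _).const_mul _).add ((hpow _).const_mul _)).div_const _


/-- With G(x) = q·f(x) + (c−A)/r, one has G(1) = w_s > w̲, G strictly
decreasing on [1,∞) tending to −∞, and a unique x > 1 with G(x) = w̲. -/
theorem stmt_3 (r lam p c A B₁ B₂ : ℝ) (hr : 0 < r) (hlam : 0 < lam)
    (hp0 : 0 < p) (hp1 : p ≤ 1) (hc : 0 < c) (hA0 : 0 ≤ A)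
    (hA : A < c * (r + lam) / (p * r + lam)) (hB₁ : 1 < B₁) (hB₂ : B₂ < 0) :
    let ws : ℝ := p * c / (p * r + lam) - A / (r + lam)
    let wlow : ℝ := -(1 - p) * A / (r + lam)
    let q : ℝ := ws - (c - A) / r
    let f : ℝ → ℝ :=
      fun z => (B₁ * (1 - B₂) * z ^ (B₁ - 1) + (B₁ - 1) * B₂ * z ^ (B₂ - 1)) / (B₁ - B₂)
    let G : ℝ → ℝ := fun x => q * f x + (c - A) / r
    G 1 = ws ∧ ws > wlow ∧ StrictAntiOn G (Set.Ici 1) ∧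
      Filter.Tendsto G Filter.atTop Filter.atBot ∧
      ∃! x : ℝ, 1 < x ∧ G x = wlow := by
  intro ws wlow q f G
  have hrl : 0 < r + lam := by linarith
  have hprl : 0 < p * r + lam := by positivity
  have hkey : A / (r + lam) < c / (p * r + lam) := by
    rw [lt_div_iff₀ hprl] at hA
    rwa [div_lt_div_iff₀ hrl hprl]
  have hq : q < 0 := by
    have e : q = lam / r * (A / (r + lam) - c / (p * r + lam)) := by
      simp only [q, ws]
      field_simp
      ring
    rw [e]
    exact mul_neg_of_pos_of_neg (by positivity) (by linarith)
  have hw : wlow < ws := by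
    have e : ws - wlow = p * (c / (p * r + lam) - A / (r + lam)) := by
      simp only [ws, wlow]
      ring
    have : 0 < ws - wlow := e ▸ mul_pos hp0 (by linarith)
    linarith
  have hf1 : f 1 = 1 := by
    have : B₁ - B₂ ≠ 0 := by linarith
    simp only [f, Real.one_rpow]
    rw [div_eq_one_iff_eq this]
    ring
  have hG1 : G 1 = ws := by
    simp only [G, hf1, q]
    ring
  have hanti : StrictAntiOn G (Set.Ici 1) := fun x hx y hy hxy =>
    add_lt_add_left (mul_lt_mul_of_neg_left (f_strictMonoOn B₁ B₂ hB₁ hB₂ hx hy hxy) hq) _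
  have htend : Filter.Tendsto G Filter.atTop Filter.atBot :=
    Filter.tendsto_atBot_add_const_right _ _
      ((f_tendsto_atTop B₁ B₂ hB₁ hB₂).const_mul_atTop_of_neg hq)
  have hcont : ContinuousOn G (Set.Ici 1) :=
    ((f_continuousOn B₁ B₂).const_mul q).add continuousOn_const
  refine ⟨hG1, hw, hanti, htend, ?_⟩
  obtain ⟨b, hb, hb1⟩ :=
    ((htend.eventually_le_atBot wlow).and (Filter.eventually_ge_atTop 1)).exists
  obtain ⟨x, hx, hGx⟩ := intermediate_value_Icc' hb1
    (hcont.mono Set.Icc_subset_Ici_self) ⟨hb, hG1 ▸ hw.le⟩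
  have hx1 : 1 < x := by
    refine lt_of_le_of_ne hx.1 ?_
    rintro rfl
    exact hw.ne (hGx.symm.trans hG1)
  exact ⟨x, ⟨hx1, hGx⟩, fun y hy =>
    hanti.injOn hy.1.le hx1.le (hy.2.trans hGx.symm)⟩
end

section
/- Let r > 0, λ > 0, p ∈ (0,1], c > 0, and let A ≥ 0 satisfy A < c(r+λ)/(pr+λ). Set w_s(A) = pc/(pr+λ) − A/(r+λ) and w̲(A) = −(1−p)A/(r+λ). Then the identity (1/r − (1−p)/(r+λ)) − (1/r − 1/(r+λ)) · (w̲(A) − (c−A)/r)/(w_s(A) − (c−A)/r) = 0 holds. (This is the identity showing that the right-hand side of equation (eq:dx) vanishes, so that the free-boundary ratio x(A) is constant in A.) -/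
/-! With `K = A (p r + λ) - c (r + λ)`, which is negative by the bound on `A`, the numerator of
the quotient is `K / (r (r + λ))` and the denominator is `λ K / (r (r + λ) (p r + λ))`. The
quotient is therefore `(p r + λ) / λ`, independent of `A`, and the identity reduces to
`1 / r - (1 - p) / (r + λ) = (p r + λ) / (r (r + λ))`. -/

/-- The right-hand side of equation (eq:dx) vanishes identically, so the
free-boundary ratio x(A) is constant in A. -/
theorem stmt_5 (r lam p c A : ℝ) (hr : 0 < r) (hlam : 0 < lam)
    (hp0 : 0 < p) (hp1 : p ≤ 1) (hc : 0 < c) (hA0 : 0 ≤ A)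
    (hA : A < c * (r + lam) / (p * r + lam)) :
    (1 / r - (1 - p) / (r + lam)) -
      (1 / r - 1 / (r + lam)) *
        ((-(1 - p) * A / (r + lam) - (c - A) / r) /
          ((p * c / (p * r + lam) - A / (r + lam)) - (c - A) / r)) = 0 := by
  have h1 : 0 < r + lam := by positivity
  have h2 : 0 < p * r + lam := by positivity
  have hK : A * (p * r + lam) - c * (r + lam) ≠ 0 :=
    (sub_neg.mpr ((lt_div_iff₀ h2).mp hA)).ne
  have hN : -(1 - p) * A / (r + lam) - (c - A) / r =
      (A * (p * r + lam) - c * (r + lam)) / (r * (r + lam)) := by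
    field_simp
    ring
  have hD : (p * c / (p * r + lam) - A / (r + lam)) - (c - A) / r =
      lam * (A * (p * r + lam) - c * (r + lam)) / (r * (r + lam) * (p * r + lam)) := by
    field_simp
    ring
  have hQ : (A * (p * r + lam) - c * (r + lam)) / (r * (r + lam)) /
      (lam * (A * (p * r + lam) - c * (r + lam)) / (r * (r + lam) * (p * r + lam))) =
      (p * r + lam) / lam := by
    -- Generalizing keeps the nonzero factor atomic, so that it cancels.
    generalize A * (p * r + lam) - c * (r + lam) = K at hK ⊢
    field_simp
  rw [hN, hD, hQ]
  field_simp
  ring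
end

section
/- Let r > 0, λ > 0, p ∈ (0,1], and let B₁ > 1, B₂ < 0 be real. Define f(z) = (B₁(1−B₂)·z^(B₁−1) + (B₁−1)B₂·z^(B₂−1))/(B₁−B₂) for z > 0, and suppose x > 1 satisfies λ·f(x) = λ + p·r. Then for every z with 1 ≤ z ≤ x, the two-sided inequality 1 − p ≤ (r+λ)/r − (λ/r)·f(z) ≤ 1 holds, with equality on the right at z = 1 and equality on the left at z = x. -/
/-! The function `f` is increasing on `(0, ∞)`: the coefficient `B₁ (1 - B₂)` multiplies an increasing
power of `z`, while the negative coefficient `(B₁ - 1) B₂` multiplies a decreasing one. Moreover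
`f 1 = 1`, and `lam * f x = lam + p * r` by hypothesis. The bounds on `[1, x]` are therefore the values
at the endpoints. -/

theorem f_mono {B₁ B₂ a b : ℝ} (hB₁ : 1 < B₁) (hB₂ : B₂ < 0) (ha : 0 < a) (hab : a ≤ b) :
    (B₁ * (1 - B₂) * a ^ (B₁ - 1) + (B₁ - 1) * B₂ * a ^ (B₂ - 1)) / (B₁ - B₂) ≤
      (B₁ * (1 - B₂) * b ^ (B₁ - 1) + (B₁ - 1) * B₂ * b ^ (B₂ - 1)) / (B₁ - B₂) := by
  have h1 : a ^ (B₁ - 1) ≤ b ^ (B₁ - 1) :=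
    Real.rpow_le_rpow ha.le hab (by linarith)
  have h2 : b ^ (B₂ - 1) ≤ a ^ (B₂ - 1) :=
    Real.rpow_le_rpow_of_nonpos ha hab (by linarith)
  have h3 : 0 ≤ B₁ * (1 - B₂) := mul_nonneg (by linarith) (by linarith)
  have h4 : (B₁ - 1) * B₂ ≤ 0 := mul_nonpos_of_nonneg_of_nonpos (by linarith) hB₂.le
  exact div_le_div_of_nonneg_right
    (add_le_add (mul_le_mul_of_nonneg_left h1 h3) (mul_le_mul_of_nonpos_left h2 h4))
    (by linarith)


/-- If λ·f(x) = λ + p·r with x > 1, then for 1 ≤ z ≤ x,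
1 − p ≤ (r+λ)/r − (λ/r)·f(z) ≤ 1, with equality at z = 1 (right) and z = x (left). -/
theorem stmt_7 (r lam p B₁ B₂ x : ℝ) (hr : 0 < r) (hlam : 0 < lam)
    (hp0 : 0 < p) (hp1 : p ≤ 1) (hB₁ : 1 < B₁) (hB₂ : B₂ < 0) (hx : 1 < x)
    (hfx : lam * ((B₁ * (1 - B₂) * x ^ (B₁ - 1) + (B₁ - 1) * B₂ * x ^ (B₂ - 1)) / (B₁ - B₂))
      = lam + p * r) :
    let f : ℝ → ℝ :=
      fun z => (B₁ * (1 - B₂) * z ^ (B₁ - 1) + (B₁ - 1) * B₂ * z ^ (B₂ - 1)) / (B₁ - B₂)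
    (∀ z : ℝ, 1 ≤ z → z ≤ x →
      1 - p ≤ (r + lam) / r - (lam / r) * f z ∧ (r + lam) / r - (lam / r) * f z ≤ 1) ∧
    (r + lam) / r - (lam / r) * f 1 = 1 ∧
    (r + lam) / r - (lam / r) * f x = 1 - p := by
  intro f
  have hmono : ∀ a b : ℝ, 0 < a → a ≤ b → f a ≤ f b := fun a b ha hab => f_mono hB₁ hB₂ ha hab
  have hf1 : f 1 = 1 := by
    have h : B₁ - B₂ ≠ 0 := by linarith
    simp only [f, Real.one_rpow]
    field_simp
    ring
  have hfx' : lam * f x = lam + p * r := hfx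
  have e1 : (r + lam) / r - (lam / r) * f 1 = 1 := by
    rw [hf1]
    field_simp
    ring
  have ex : (r + lam) / r - (lam / r) * f x = 1 - p := by
    rw [div_mul_eq_mul_div, hfx']
    field_simp
    ring
  have hlr : 0 ≤ lam / r := (div_pos hlam hr).le
  refine ⟨fun z hz1 hzx => ⟨?_, ?_⟩, e1, ex⟩
  · have := mul_le_mul_of_nonneg_left (hmono z x (by linarith) hzx) hlr
    linarith
  · have := mul_le_mul_of_nonneg_left (hmono 1 z one_pos hz1) hlr
    linarith
end

section
/- Let r > 0, λ > 0, and let B₁ > 1, B₂ < 0 be real. Then there exists a unique x > 1 such that (λ/(r+λ)) · (B₁(1−B₂)·x^(B₁−1) + B₂(B₁−1)·x^(B₂−1))/(B₁−B₂) = 1; equivalently, (λ/(r+λ))·f(x) = 1, where f(z) = (B₁(1−B₂)·z^(B₁−1) + (B₁−1)B₂·z^(B₂−1))/(B₁−B₂). In particular, the solution x of this equation does not depend on the annuity income A. -/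
/-!
The numerator `g x = B₁ (1 - B₂) x ^ (B₁ - 1) + B₂ (B₁ - 1) x ^ (B₂ - 1)` is a positive multiple of
a positive power plus a negative multiple of a negative power, hence continuous and strictly
increasing on `(0, ∞)`; it equals `B₁ - B₂` at `1` and tends to `∞`. The equation says that
`g x = (B₁ - B₂) (r + lam) / lam`, a value strictly above `g 1`, so the intermediate value theorem
gives a solution `x > 1` and strict monotonicity makes it unique.
-/

open Filter Set in
/-- The statement with the constants abstracted: `a = B₁ (1 - B₂)`, `b = -B₂ (B₁ - 1)`,
`p = B₁ - 1`, `q = 1 - B₂`. -/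
lemma existsUnique_rpow_sub_rpow_neg {a b p q K : ℝ} (ha : 0 < a) (hb : 0 < b) (hp : 0 < p)
    (hq : 0 < q) (hK : a - b < K) :
    ∃! x : ℝ, 1 < x ∧ a * x ^ p - b * x ^ (-q) = K := by
  set g : ℝ → ℝ := fun x => a * x ^ p - b * x ^ (-q) with hg
  have hmono : StrictMonoOn g (Ioi 0) := by
    intro x hx y hy hxy
    have h1 : x ^ p < y ^ p := Real.rpow_lt_rpow (le_of_lt hx) hxy hp
    have h2 : y ^ (-q) < x ^ (-q) := Real.rpow_lt_rpow_of_neg hx hxy (by linarith)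
    exact sub_lt_sub (mul_lt_mul_of_pos_left h1 ha) (mul_lt_mul_of_pos_left h2 hb)
  have hlim : Tendsto g atTop atTop := by
    have h1 := (tendsto_rpow_atTop hp).const_mul_atTop ha
    have h2 := ((tendsto_rpow_neg_atTop hq).const_mul b).neg
    simpa [hg, sub_eq_add_neg] using h1.atTop_add h2
  have hcont : ContinuousOn g (Ioi 0) := by
    intro x hx
    have hx0 : x ≠ 0 := ne_of_gt hx
    exact (((Real.continuousAt_rpow_const x p (Or.inl hx0)).const_mul a).sub
      ((Real.continuousAt_rpow_const x (-q) (Or.inl hx0)).const_mul b)).continuousWithinAt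
  have hg1 : g 1 = a - b := by simp [hg]
  obtain ⟨M, hM, hKM⟩ := ((eventually_ge_atTop (1 : ℝ)).and (hlim.eventually_ge_atTop K)).exists
  obtain ⟨x, hx, hxK⟩ := intermediate_value_Icc hM
    (hcont.mono fun y hy => lt_of_lt_of_le one_pos hy.1) ⟨hg1.trans_le hK.le, hKM⟩
  have hx1 : 1 < x := by
    refine lt_of_le_of_ne hx.1 ?_
    rintro rfl
    linarith
  refine ⟨x, ⟨hx1, hxK⟩, ?_⟩
  rintro y ⟨hy1, hyK⟩
  exact hmono.injOn (one_pos.trans hy1) (one_pos.trans hx1) (hyK.trans hxK.symm)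

/-- There is a unique x > 1 with (λ/(r+λ))·f(x) = 1, where
f(z) = (B₁(1−B₂)z^(B₁−1) + (B₁−1)B₂z^(B₂−1))/(B₁−B₂). -/
theorem stmt_8 (r lam B₁ B₂ : ℝ) (hr : 0 < r) (hlam : 0 < lam)
    (hB₁ : 1 < B₁) (hB₂ : B₂ < 0) :
    ∃! x : ℝ, 1 < x ∧
      (lam / (r + lam)) *
        ((B₁ * (1 - B₂) * x ^ (B₁ - 1) + B₂ * (B₁ - 1) * x ^ (B₂ - 1)) / (B₁ - B₂)) = 1 := by
  have hD : 0 < B₁ - B₂ := by linarith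
  have hs : 0 < r + lam := by linarith
  have hK : B₁ * (1 - B₂) - (-B₂) * (B₁ - 1) < (B₁ - B₂) * (r + lam) / lam := by
    rw [lt_div_iff₀ hlam]
    nlinarith [mul_pos hD hr]
  have key := existsUnique_rpow_sub_rpow_neg (p := B₁ - 1) (q := 1 - B₂)
    (mul_pos (by linarith : 0 < B₁) (by linarith : 0 < 1 - B₂))
    (mul_pos (neg_pos.2 hB₂) (by linarith : 0 < B₁ - 1)) (by linarith) (by linarith) hK
  refine (existsUnique_congr fun x => and_congr_right fun _ => ?_).1 key
  rw [neg_sub, div_mul_div_comm, div_eq_one_iff_eq (mul_pos hs hD).ne', eq_div_iff hlam.ne']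
  constructor <;> intro h <;> linarith
end

section
/- Let r > 0, λ > 0, B₁ > 1, B₂ < 0, and suppose x > 1 satisfies (λ/(r+λ)) · (B₁(1−B₂)·x^(B₁−1) + B₂(B₁−1)·x^(B₂−1))/(B₁−B₂) = 1. Then x^(B₁−1) < (r+λ)/λ; equivalently, (λ/(r(r+λ)))·x^(B₁−1) − 1/r < 0. -/
/-!
Write `a = x ^ (B₁ - 1)` and `b = x ^ (B₂ - 1)`, so `b < a` because `x > 1` and `B₂ < B₁`.
The coefficients `B₁ * (1 - B₂)` and `B₂ * (B₁ - 1)` add up to `B₁ - B₂ > 0`, and the second one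
is negative; hence their weighted mean of `a` and `b` exceeds `a`. The hypothesis says that this
mean equals `(r + lam) / lam`, which gives both forms of the inequality.
-/

/-- If x > 1 satisfies equation (iix), then x^(B₁−1) < (r+λ)/λ;
equivalently (λ/(r(r+λ)))·x^(B₁−1) − 1/r < 0. -/
theorem stmt_9 (r lam B₁ B₂ x : ℝ) (hr : 0 < r) (hlam : 0 < lam)
    (hB₁ : 1 < B₁) (hB₂ : B₂ < 0) (hx : 1 < x)
    (heq : (lam / (r + lam)) *
      ((B₁ * (1 - B₂) * x ^ (B₁ - 1) + B₂ * (B₁ - 1) * x ^ (B₂ - 1)) / (B₁ - B₂)) = 1) :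
    x ^ (B₁ - 1) < (r + lam) / lam ∧
      (lam / (r * (r + lam))) * x ^ (B₁ - 1) - 1 / r < 0 := by
  have hab : x ^ (B₂ - 1) < x ^ (B₁ - 1) :=
    Real.rpow_lt_rpow_of_exponent_lt hx (by linarith)
  generalize x ^ (B₁ - 1) = a at *
  generalize x ^ (B₂ - 1) = b at *
  have hs : 0 < r + lam := by linarith
  have hB : 0 < B₁ - B₂ := by linarith
  have hmean : a < (B₁ * (1 - B₂) * a + B₂ * (B₁ - 1) * b) / (B₁ - B₂) := by
    rw [lt_div_iff₀ hB]
    have : 0 < -B₂ * (B₁ - 1) * (a - b) :=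
      mul_pos (mul_pos (by linarith) (by linarith)) (by linarith)
    linarith
  have hlt : lam / (r + lam) * a < 1 := by
    rw [← heq]
    exact mul_lt_mul_of_pos_left hmean (div_pos hlam hs)
  constructor
  · rw [lt_div_iff₀ hlam]
    rw [div_mul_eq_mul_div, div_lt_one hs] at hlt
    linarith
  · have hfactor : lam / (r * (r + lam)) * a - 1 / r = (lam / (r + lam) * a - 1) / r := by
      field_simp
    rw [hfactor]
    exact div_neg_of_neg_of_pos (by linarith) hr
end

section
/- Let B₁ > 1, B₂ < 0 and K ≥ 0 be real constants, and define g(z) = −K·((B₁−1)(1−B₂)/(B₁−B₂))·(z^(B₁−1) − z^(B₂−1)) − ((1−B₂)/(B₁−B₂))·z^(B₁−1) − ((B₁−1)/(B₁−B₂))·z^(B₂−1). Then g'(z) ≤ 0 for every z ≥ 1; that is, g is non-increasing on [1, ∞). -/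
/-!
Put `C = (B₁ - 1) (1 - B₂) / (B₁ - B₂)`, which is nonnegative. Differentiating termwise for `z > 0`,
`g' z = -K C ((B₁ - 1) z ^ (B₁ - 2) + (1 - B₂) z ^ (B₂ - 2)) - C (z ^ (B₁ - 2) - z ^ (B₂ - 2))`:
the coefficients of the last two terms of `g` are such that both powers get the same factor `C`.
The first summand is nonpositive since `K ≥ 0`, the second since `z ≥ 1` and `B₂ < B₁`.
-/

/-- With K ≥ 0, the function g(z) = −K·((B₁−1)(1−B₂)/(B₁−B₂))·(z^(B₁−1) −
z^(B₂−1)) − ((1−B₂)/(B₁−B₂))·z^(B₁−1) − ((B₁−1)/(B₁−B₂))·z^(B₂−1) has g'(z) ≤ 0 for all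
z ≥ 1, i.e. g is non-increasing on [1,∞). -/
theorem stmt_11 (B₁ B₂ K : ℝ) (hB₁ : 1 < B₁) (hB₂ : B₂ < 0) (hK : 0 ≤ K) :
    let g : ℝ → ℝ := fun z =>
      -K * ((B₁ - 1) * (1 - B₂) / (B₁ - B₂)) * (z ^ (B₁ - 1) - z ^ (B₂ - 1))
        - ((1 - B₂) / (B₁ - B₂)) * z ^ (B₁ - 1) - ((B₁ - 1) / (B₁ - B₂)) * z ^ (B₂ - 1)
    (∀ z : ℝ, 1 ≤ z → deriv g z ≤ 0) ∧ AntitoneOn g (Set.Ici 1) := by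
  intro g
  have hderiv : ∀ z : ℝ, 1 ≤ z → HasDerivAt g
      (-K * ((B₁ - 1) * (1 - B₂) / (B₁ - B₂)) *
          ((B₁ - 1) * z ^ (B₁ - 1 - 1) - (B₂ - 1) * z ^ (B₂ - 1 - 1))
        - ((1 - B₂) / (B₁ - B₂)) * ((B₁ - 1) * z ^ (B₁ - 1 - 1))
        - ((B₁ - 1) / (B₁ - B₂)) * ((B₂ - 1) * z ^ (B₂ - 1 - 1))) z := by
    intro z hz
    have hz0 : z ≠ 0 := by positivity
    have h₁ := Real.hasDerivAt_rpow_const (x := z) (p := B₁ - 1) (Or.inl hz0)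
    have h₂ := Real.hasDerivAt_rpow_const (x := z) (p := B₂ - 1) (Or.inl hz0)
    exact (((h₁.sub h₂).const_mul _).sub (h₁.const_mul _)).sub (h₂.const_mul _)
  have hnonpos : ∀ z : ℝ, 1 ≤ z → deriv g z ≤ 0 := by
    intro z hz
    rw [(hderiv z hz).deriv]
    have hC : 0 ≤ (B₁ - 1) * (1 - B₂) / (B₁ - B₂) :=
      div_nonneg (mul_nonneg (by linarith) (by linarith)) (by linarith)
    have hPQ : z ^ (B₂ - 1 - 1) ≤ z ^ (B₁ - 1 - 1) :=
      Real.rpow_le_rpow_of_exponent_le hz (by linarith)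
    have hP : 0 ≤ z ^ (B₁ - 1 - 1) := by positivity
    have hQ : 0 ≤ z ^ (B₂ - 1 - 1) := by positivity
    have hsum : 0 ≤ (B₁ - 1) * z ^ (B₁ - 1 - 1) + (1 - B₂) * z ^ (B₂ - 1 - 1) :=
      add_nonneg (mul_nonneg (by linarith) hP) (mul_nonneg (by linarith) hQ)
    have hfirst := mul_nonneg (mul_nonneg hK hC) hsum
    have hsecond := mul_nonneg hC (sub_nonneg.2 hPQ)
    linear_combination hfirst + hsecond
  refine ⟨hnonpos, antitoneOn_of_deriv_nonpos (convex_Ici 1) ?_ ?_ ?_⟩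
  · exact fun z hz => (hderiv z hz).continuousAt.continuousWithinAt
  · exact fun z hz =>
      (hderiv z (interior_subset hz)).differentiableAt.differentiableWithinAt
  · exact fun z hz => hnonpos z (interior_subset hz)
end

section
/- Let r > 0, λ > 0, B₁ > 1, B₂ < 0, p ∈ (0,1], and let x > 1 satisfy (λ/(r+λ))·(B₁(1−B₂)·x^(B₁−1) + B₂(B₁−1)·x^(B₂−1))/(B₁−B₂) = 1. Define K = (−(B₂/(1−B₂))·(1−p)/(r+λ) + (λ/(r(r+λ)))·x^(B₁−1) − 1/r) / ((λ/(r(r+λ)))·x^(B₁−1) − 1/r) and assume K ≥ 0. Then for every z with 1 ≤ z ≤ x: 1 − p ≤ −K·(λ/r)·((B₁−1)(1−B₂)/(B₁−B₂))·(z^(B₁−1) − z^(B₂−1)) − (λ/r)·(((1−B₂)/(B₁−B₂))·z^(B₁−1) + ((B₁−1)/(B₁−B₂))·z^(B₂−1)) + (r+λ)/r ≤ 1, with equality on the right at z = 1 and equality on the left at z = x. -/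
/-! With `a = B₁ - 1 > 0` and `b = 1 - B₂ > 1`, the middle expression is
`F z = 1 + c - K c (ab / (a + b)) (z ^ a - z ^ (-b)) - c (b z ^ a + a z ^ (-b)) / (a + b)`, `c = lam / r`.
Both `z ^ a - z ^ (-b)` and `b z ^ a + a z ^ (-b)` increase on `[1, ∞)`, so `F` decreases when
`K ≥ 0`, and the bounds are the endpoint values. The value at `1` is immediate. At `x`, the equation
for `x` says that the denominator of `K` equals
`-lam a (b - 1) (x ^ a - x ^ (-b)) / ((a + b) r (r + lam))`, which is nonzero; hence
`K (ab / (a + b)) c (x ^ a - x ^ (-b)) = (ab / (a + b)) c (x ^ a - x ^ (-b)) - (1 - p)`,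
and one more use of the equation for `x` gives `F x = 1 - p`. -/

/-- Weighted arithmetic-geometric mean inequality for `t ^ a` and `t ^ (-b)`, whose weighted
geometric mean is `1`; it follows from `1 + y ≤ exp y` at `y = a log t` and `y = -b log t`. -/
lemma add_le_weighted_rpow {a b t : ℝ} (ha : 0 ≤ a) (hb : 0 ≤ b) (ht : 0 < t) :
    a + b ≤ b * t ^ a + a * t ^ (-b) := by
  rw [Real.rpow_def_of_pos ht, Real.rpow_def_of_pos ht]
  have h1 := mul_le_mul_of_nonneg_left (Real.add_one_le_exp (Real.log t * a)) hb
  have h2 := mul_le_mul_of_nonneg_left (Real.add_one_le_exp (Real.log t * -b)) ha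
  linarith

lemma weighted_rpow_mono {a b z w : ℝ} (ha : 0 ≤ a) (hb : 0 ≤ b) (hz : 1 ≤ z) (hzw : z ≤ w) :
    b * z ^ a + a * z ^ (-b) ≤ b * w ^ a + a * w ^ (-b) := by
  have hz0 : 0 < z := by linarith
  -- For `w = z t` the difference is `b z ^ a (t ^ a - 1) - a z ^ (-b) (1 - t ^ (-b))`.
  obtain ⟨t, ht, rfl⟩ : ∃ t, 1 ≤ t ∧ w = z * t :=
    ⟨w / z, (one_le_div hz0).2 hzw, by field_simp⟩
  have ht0 : 0 < t := by linarith
  rw [Real.mul_rpow hz0.le ht0.le, Real.mul_rpow hz0.le ht0.le]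
  have h := add_le_weighted_rpow ha hb ht0
  have h1 : 1 ≤ z ^ a := Real.one_le_rpow hz ha
  have h2 : z ^ (-b) ≤ 1 := Real.rpow_le_one_of_one_le_of_nonpos hz (by linarith)
  have h3 : 0 < z ^ (-b) := Real.rpow_pos_of_pos hz0 _
  have h4 : 1 ≤ t ^ a := Real.one_le_rpow ht ha
  have h5 : 0 ≤ b * (t ^ a - 1) := mul_nonneg hb (by linarith)
  nlinarith [mul_nonneg (sub_nonneg.2 (h2.trans h1)) h5, mul_nonneg h3.le (sub_nonneg.2 h)]

lemma rpow_sub_rpow_neg_mono {a b z w : ℝ} (ha : 0 ≤ a) (hb : 0 ≤ b) (hz : 1 ≤ z) (hzw : z ≤ w) :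
    z ^ a - z ^ (-b) ≤ w ^ a - w ^ (-b) :=
  sub_le_sub (Real.rpow_le_rpow (by linarith) hzw ha)
    (Real.rpow_le_rpow_of_nonpos (by linarith) hzw (by linarith))

/-- Inequality (iieq): for 1 ≤ z ≤ x,
1 − p ≤ −K(λ/r)((B₁−1)(1−B₂)/(B₁−B₂))(z^(B₁−1) − z^(B₂−1))
       − (λ/r)(((1−B₂)/(B₁−B₂))z^(B₁−1) + ((B₁−1)/(B₁−B₂))z^(B₂−1)) + (r+λ)/r ≤ 1,
with equality on the right at z = 1 and on the left at z = x. -/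
theorem stmt_12 (r lam p B₁ B₂ x : ℝ) (hr : 0 < r) (hlam : 0 < lam)
    (hp0 : 0 < p) (hp1 : p ≤ 1) (hB₁ : 1 < B₁) (hB₂ : B₂ < 0) (hx : 1 < x)
    (heq : (lam / (r + lam)) *
      ((B₁ * (1 - B₂) * x ^ (B₁ - 1) + B₂ * (B₁ - 1) * x ^ (B₂ - 1)) / (B₁ - B₂)) = 1) :
    let K : ℝ :=
      (-(B₂ / (1 - B₂)) * (1 - p) / (r + lam) + (lam / (r * (r + lam))) * x ^ (B₁ - 1) - 1 / r) /
        ((lam / (r * (r + lam))) * x ^ (B₁ - 1) - 1 / r)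
    let F : ℝ → ℝ := fun z =>
      -K * (lam / r) * ((B₁ - 1) * (1 - B₂) / (B₁ - B₂)) * (z ^ (B₁ - 1) - z ^ (B₂ - 1))
        - (lam / r) * (((1 - B₂) / (B₁ - B₂)) * z ^ (B₁ - 1)
            + ((B₁ - 1) / (B₁ - B₂)) * z ^ (B₂ - 1))
        + (r + lam) / r
    0 ≤ K →
      (∀ z : ℝ, 1 ≤ z → z ≤ x → 1 - p ≤ F z ∧ F z ≤ 1) ∧ F 1 = 1 ∧ F x = 1 - p := by
  obtain ⟨a, rfl⟩ : ∃ a, B₁ = a + 1 := ⟨B₁ - 1, by ring⟩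
  obtain ⟨b, rfl⟩ : ∃ b, B₂ = 1 - b := ⟨1 - B₂, by ring⟩
  have ha : 0 < a := by linarith
  have hb : 0 < b - 1 := by linarith
  have hb0 : 0 < b := by linarith
  have e1 : a + 1 - 1 = a := by ring
  have e2 : 1 - b - 1 = -b := by ring
  have e3 : a + 1 - (1 - b) = a + b := by ring
  have e4 : 1 - (1 - b) = b := by ring
  have e5 : -(1 - b) = b - 1 := by ring
  rw [e1, e2, e3, e4] at heq
  rw [e1, e2, e3, e4]
  intro K F hK
  have hab : 0 < a + b := by linarith
  have hrl : 0 < r + lam := by linarith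
  have anti : ∀ z w : ℝ, 1 ≤ z → z ≤ w → F w ≤ F z := by
    intro z w hz hzw
    have h1 := weighted_rpow_mono ha.le hb0.le hz hzw
    have h2 := rpow_sub_rpow_neg_mono ha.le hb0.le hz hzw
    have hc : 0 ≤ K * (lam / r) * (a * b / (a + b)) := by positivity
    have hd : 0 ≤ lam / r / (a + b) := by positivity
    have h3 := mul_le_mul_of_nonneg_left h2 hc
    have h4 := mul_le_mul_of_nonneg_left h1 hd
    have e : ∀ y, F y = -(K * (lam / r) * (a * b / (a + b)) * (y ^ a - y ^ (-b)))
        - lam / r / (a + b) * (b * y ^ a + a * y ^ (-b)) + (r + lam) / r := by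
      intro y
      simp only [F]
      ring
    rw [e, e]
    linarith
  have F1 : F 1 = 1 := by
    simp only [F, Real.one_rpow]
    field_simp
    ring
  have Fx : F x = 1 - p := by
    have hX : 1 < x ^ a := Real.one_lt_rpow hx ha
    have hV : x ^ (-b) < 1 := Real.rpow_lt_one_of_one_lt_of_neg hx (by linarith)
    simp only [F, K]
    generalize x ^ a = X at *
    generalize x ^ (-b) = V at *
    have hXV : 0 < X - V := by linarith
    have heq' : lam * ((a + 1) * b * X + (1 - b) * a * V) = (r + lam) * (a + b) := by
      field_simp at heq
      linarith
    have hD : lam / (r * (r + lam)) * X - 1 / r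
        = -(lam * a * (b - 1) * (X - V)) / ((a + b) * (r * (r + lam))) := by
      field_simp
      linarith
    have hKe : (-((1 - b) / b) * (1 - p) / (r + lam) + lam / (r * (r + lam)) * X - 1 / r) /
        (lam / (r * (r + lam)) * X - 1 / r)
        = 1 - (1 - p) * r * (a + b) / (lam * a * b * (X - V)) := by
      rw [add_sub_assoc, hD]
      have := hb.ne'
      have := hXV.ne'
      field_simp
      ring
    rw [hKe]
    have := hXV.ne'
    field_simp
    linarith
  refine ⟨fun z hz hzx => ⟨?_, ?_⟩, F1, Fx⟩
  · rw [← Fx]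
    exact anti z x hz hzx
  · rw [← F1]
    exact anti 1 z le_rfl hz
end

section
/- Let r > 0, λ > 0, p ∈ (0,1], and let B₁ > 1, B₂ < 0 be real. Then there exists a unique x > 1 such that (λ/(r(r+λ))) · (((1−B₂)/(B₁−B₂))·x^(B₁−1) + ((B₁−1)/(B₁−B₂))·x^(B₂−1)) = 1/r − (1−p)/(r+λ); equivalently, λ·h(x) = λ + p·r, where h(z) = ((1−B₂)·z^(B₁−1) + (B₁−1)·z^(B₂−1))/(B₁−B₂). In particular x does not depend on the annuity income A. -/
/-!
After clearing denominators the equation reads `λ g(x) = (λ + p r) (B₁ - B₂)`, where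
`g(z) = (1 - B₂) z ^ (B₁ - 1) + (B₁ - 1) z ^ (B₂ - 1)`. The derivative
`g'(z) = (B₁ - 1) (1 - B₂) (z ^ (B₁ - 2) - z ^ (B₂ - 2))` is positive for `z > 1`, so `g` is
strictly increasing on `[1, ∞)`; it starts at `g(1) = B₁ - B₂`, which is below the target value
because `p r > 0`, and it tends to infinity. The intermediate value theorem gives existence, and
strict monotonicity gives uniqueness.
-/

/-- The function `g = (B₁ - B₂) h`, that is, `h` without its normalizing denominator. -/
noncomputable def boundaryFun (B₁ B₂ z : ℝ) : ℝ :=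
  (1 - B₂) * z ^ (B₁ - 1) + (B₁ - 1) * z ^ (B₂ - 1)

lemma boundaryFun_hasDerivAt (B₁ B₂ : ℝ) {z : ℝ} (hz : 0 < z) :
    HasDerivAt (boundaryFun B₁ B₂)
      ((B₁ - 1) * (1 - B₂) * (z ^ (B₁ - 1 - 1) - z ^ (B₂ - 1 - 1))) z := by
  have h₁ := (Real.hasDerivAt_rpow_const (p := B₁ - 1) (Or.inl hz.ne')).const_mul (1 - B₂)
  have h₂ := (Real.hasDerivAt_rpow_const (p := B₂ - 1) (Or.inl hz.ne')).const_mul (B₁ - 1)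
  exact (h₁.add h₂).congr_deriv (by ring)

lemma boundaryFun_continuousOn (B₁ B₂ : ℝ) : ContinuousOn (boundaryFun B₁ B₂) (Set.Ici 1) :=
  fun _ hz => (boundaryFun_hasDerivAt B₁ B₂
    (zero_lt_one.trans_le hz)).continuousAt.continuousWithinAt

lemma boundaryFun_strictMonoOn {B₁ B₂ : ℝ} (hB₁ : 1 < B₁) (hB₂ : B₂ < 0) :
    StrictMonoOn (boundaryFun B₁ B₂) (Set.Ici 1) := by
  refine strictMonoOn_of_deriv_pos (convex_Ici 1) (boundaryFun_continuousOn B₁ B₂) fun z hz => ?_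
  rw [interior_Ici, Set.mem_Ioi] at hz
  rw [(boundaryFun_hasDerivAt B₁ B₂ (zero_lt_one.trans hz)).deriv]
  have hlt : z ^ (B₂ - 1 - 1) < z ^ (B₁ - 1 - 1) :=
    Real.rpow_lt_rpow_of_exponent_lt hz (by linarith)
  exact mul_pos (mul_pos (by linarith) (by linarith)) (by linarith)

lemma boundaryFun_tendsto {B₁ B₂ : ℝ} (hB₁ : 1 < B₁) (hB₂ : B₂ < 0) :
    Filter.Tendsto (boundaryFun B₁ B₂) Filter.atTop Filter.atTop := by
  have h₁ : Filter.Tendsto (fun z : ℝ => (1 - B₂) * z ^ (B₁ - 1)) Filter.atTop Filter.atTop :=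
    (tendsto_rpow_atTop (by linarith)).const_mul_atTop (by linarith)
  refine Filter.tendsto_atTop_mono' _ ?_ h₁
  filter_upwards [Filter.eventually_ge_atTop (0 : ℝ)] with z hz
  have := mul_nonneg (by linarith : (0 : ℝ) ≤ B₁ - 1) (Real.rpow_nonneg hz (B₂ - 1))
  unfold boundaryFun
  linarith

/-- The equation for the boundary ratio is equivalent to `λ g(x) = (λ + p r) (B₁ - B₂)`. -/
lemma boundary_eq_iff {r lam p B₁ B₂ : ℝ} (hr : 0 < r) (hlam : 0 < lam)
    (hB₁ : 1 < B₁) (hB₂ : B₂ < 0) (x : ℝ) :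
    (lam / (r * (r + lam))) *
        (((1 - B₂) / (B₁ - B₂)) * x ^ (B₁ - 1) + ((B₁ - 1) / (B₁ - B₂)) * x ^ (B₂ - 1))
        = 1 / r - (1 - p) / (r + lam) ↔
      boundaryFun B₁ B₂ x = (lam + p * r) * (B₁ - B₂) / lam := by
  have hB : B₁ - B₂ ≠ 0 := by linarith
  have hrl : r + lam ≠ 0 := by positivity
  have hL : (lam / (r * (r + lam))) *
        (((1 - B₂) / (B₁ - B₂)) * x ^ (B₁ - 1) + ((B₁ - 1) / (B₁ - B₂)) * x ^ (B₂ - 1))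
      = lam * boundaryFun B₁ B₂ x / (r * (r + lam) * (B₁ - B₂)) := by
    unfold boundaryFun
    field_simp
  have hR : 1 / r - (1 - p) / (r + lam)
      = (lam + p * r) * (B₁ - B₂) / (r * (r + lam) * (B₁ - B₂)) := by
    field_simp
    ring
  rw [hL, hR, div_left_inj' (by positivity), eq_div_iff hlam.ne', mul_comm lam]

/-- There is a unique x > 1 with
(λ/(r(r+λ)))·(((1−B₂)/(B₁−B₂))x^(B₁−1) + ((B₁−1)/(B₁−B₂))x^(B₂−1)) = 1/r − (1−p)/(r+λ);
equivalently λ·h(x) = λ + p·r. -/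
theorem stmt_13 (r lam p B₁ B₂ : ℝ) (hr : 0 < r) (hlam : 0 < lam)
    (hp0 : 0 < p) (hp1 : p ≤ 1) (hB₁ : 1 < B₁) (hB₂ : B₂ < 0) :
    ∃! x : ℝ, 1 < x ∧
      (lam / (r * (r + lam))) *
        (((1 - B₂) / (B₁ - B₂)) * x ^ (B₁ - 1) + ((B₁ - 1) / (B₁ - B₂)) * x ^ (B₂ - 1))
        = 1 / r - (1 - p) / (r + lam) := by
  simp only [boundary_eq_iff hr hlam hB₁ hB₂]
  have hone : boundaryFun B₁ B₂ 1 < (lam + p * r) * (B₁ - B₂) / lam := by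
    have := mul_pos (mul_pos hp0 hr) (by linarith : 0 < B₁ - B₂)
    rw [lt_div_iff₀ hlam]
    simp only [boundaryFun, Real.one_rpow]
    linarith
  obtain ⟨M, hM, hM1⟩ := (((boundaryFun_tendsto hB₁ hB₂).eventually_ge_atTop
    ((lam + p * r) * (B₁ - B₂) / lam)).and (Filter.eventually_ge_atTop 1)).exists
  obtain ⟨x, hx, hxe⟩ := intermediate_value_Icc hM1
    ((boundaryFun_continuousOn B₁ B₂).mono Set.Icc_subset_Ici_self) ⟨hone.le, hM⟩
  have hx1 : 1 < x := by
    refine lt_of_le_of_ne hx.1 ?_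
    rintro rfl
    exact hone.ne hxe
  refine ⟨x, ⟨hx1, hxe⟩, fun y hy => ?_⟩
  exact (boundaryFun_strictMonoOn hB₁ hB₂).injOn hy.1.le hx1.le (hy.2.trans hxe.symm)
end

section
/- Let r > 0, λ > 0, p ∈ (0,1], and let B₁ > 1, B₂ < 0 be real. Define h(z) = ((1−B₂)·z^(B₁−1) + (B₁−1)·z^(B₂−1))/(B₁−B₂), and suppose x > 1 satisfies λ·h(x) = λ + p·r. Then for every z with 1 ≤ z ≤ x: −1 ≤ (λ/r)·h(z) − (r+λ)/r ≤ −(1−p), with equality on the left at z = 1 and equality on the right at z = x. -/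
/-!
The function `h` satisfies `h 1 = 1` and is nondecreasing on `[1, ∞)`, so `1 ≤ h z ≤ h x` for
`1 ≤ z ≤ x`; the increasing affine map `v ↦ (lam / r) * v - (r + lam) / r` turns these bounds into
the claimed ones. For monotonicity write `w = z * t` with `t ≥ 1`. As `z ^ (B₂ - 1) ≤ z ^ (B₁ - 1)`
for `z ≥ 1`, the increment of the numerator of `h` from `z` to `w` is at least `z ^ (B₂ - 1)` times
its increment from `1` to `t`, and the latter is nonnegative by the inequality
`t ^ c ≥ 1 + c * log t`, in which the logarithmic terms cancel.
-/

/-- The tangent-line bound for the exponential, applied to `t ^ c = exp (c * log t)`. -/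
lemma one_add_mul_log_le_rpow {t : ℝ} (ht : 0 < t) (c : ℝ) : 1 + c * Real.log t ≤ t ^ c := by
  rw [Real.rpow_def_of_pos ht, mul_comm c, add_comm]
  exact Real.add_one_le_exp _

lemma numerator_mono {B₁ B₂ z w : ℝ} (hB₁ : 1 < B₁) (hB₂ : B₂ < 0) (hz : 1 ≤ z) (hzw : z ≤ w) :
    (1 - B₂) * z ^ (B₁ - 1) + (B₁ - 1) * z ^ (B₂ - 1) ≤
      (1 - B₂) * w ^ (B₁ - 1) + (B₁ - 1) * w ^ (B₂ - 1) := by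
  have hz0 : 0 < z := by linarith
  obtain ⟨t, ht, rfl⟩ : ∃ t, 1 ≤ t ∧ w = z * t :=
    ⟨w / z, (one_le_div hz0).2 hzw, by field_simp⟩
  have ht0 : 0 < t := by linarith
  rw [Real.mul_rpow hz0.le ht0.le, Real.mul_rpow hz0.le ht0.le]
  have hzpow : z ^ (B₂ - 1) ≤ z ^ (B₁ - 1) := Real.rpow_le_rpow_of_exponent_le hz (by linarith)
  have hzpos : 0 ≤ z ^ (B₂ - 1) := by positivity
  have ht1 : 1 ≤ t ^ (B₁ - 1) := Real.one_le_rpow ht (by linarith)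
  have h₁ := mul_le_mul_of_nonneg_left (one_add_mul_log_le_rpow ht0 (B₁ - 1))
    (show 0 ≤ 1 - B₂ by linarith)
  have h₂ := mul_le_mul_of_nonneg_left (one_add_mul_log_le_rpow ht0 (B₂ - 1))
    (show 0 ≤ B₁ - 1 by linarith)
  have hincr : 0 ≤ (1 - B₂) * (t ^ (B₁ - 1) - 1) + (B₁ - 1) * (t ^ (B₂ - 1) - 1) := by
    linarith
  have h₃ := mul_nonneg hzpos hincr
  have h₄ := mul_nonneg (mul_nonneg (show 0 ≤ 1 - B₂ by linarith) (sub_nonneg.2 ht1))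
    (sub_nonneg.2 hzpow)
  linarith

/-- If λ·h(x) = λ + p·r with x > 1, then for 1 ≤ z ≤ x,
−1 ≤ (λ/r)·h(z) − (r+λ)/r ≤ −(1−p), with equality on the left at z = 1 and on the
right at z = x. -/
theorem stmt_15 (r lam p B₁ B₂ x : ℝ) (hr : 0 < r) (hlam : 0 < lam)
    (hp0 : 0 < p) (hp1 : p ≤ 1) (hB₁ : 1 < B₁) (hB₂ : B₂ < 0) (hx : 1 < x)
    (hhx : lam * (((1 - B₂) * x ^ (B₁ - 1) + (B₁ - 1) * x ^ (B₂ - 1)) / (B₁ - B₂))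
      = lam + p * r) :
    let h : ℝ → ℝ := fun z => ((1 - B₂) * z ^ (B₁ - 1) + (B₁ - 1) * z ^ (B₂ - 1)) / (B₁ - B₂)
    (∀ z : ℝ, 1 ≤ z → z ≤ x →
      -1 ≤ (lam / r) * h z - (r + lam) / r ∧ (lam / r) * h z - (r + lam) / r ≤ -(1 - p)) ∧
    (lam / r) * h 1 - (r + lam) / r = -1 ∧
    (lam / r) * h x - (r + lam) / r = -(1 - p) := by
  intro h
  have hB : 0 < B₁ - B₂ := by linarith
  have h1 : h 1 = 1 := by
    simp only [h, Real.one_rpow]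
    field_simp
    ring
  have hmono : ∀ z w : ℝ, 1 ≤ z → z ≤ w → h z ≤ h w := fun z w hz hzw =>
    div_le_div_of_nonneg_right (numerator_mono hB₁ hB₂ hz hzw) hB.le
  -- The map sending `v` to `(lam / r) * v - (r + lam) / r`, which is increasing, sends
  -- `h 1` to `-1` and `h x` to `-(1 - p)`.
  have e1 : (lam / r) * h 1 - (r + lam) / r = -1 := by
    rw [h1]
    field_simp
    ring
  have ex : (lam / r) * h x - (r + lam) / r = -(1 - p) := by
    have hx' : lam * h x = lam + p * r := hhx
    rw [div_mul_eq_mul_div, hx']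
    field_simp
    ring
  have hc : 0 ≤ lam / r := by positivity
  refine ⟨fun z hz hzx => ⟨?_, ?_⟩, e1, ex⟩
  · have := mul_le_mul_of_nonneg_left (hmono 1 z le_rfl hz) hc
    linarith
  · have := mul_le_mul_of_nonneg_left (hmono z x hz hzx) hc
    linarith
end

section
/- Let α₁, α₂, α₃, α₄ be real numbers with α₃ > 0 and (α₂−α₁)² + 4α₃α₄ ≥ 0, and let c > 0. Define b = ((α₂−α₁) + √((α₂−α₁)² + 4α₃α₄))/(2α₃) and w_b(A) = b·(c−A) for 0 ≤ A < c. Then w_b satisfies the nonlinear ODE α₁·(c−A)·w_b'(A) + α₂·w_b(A) + α₃·w_b'(A)·w_b(A) + α₄·(c−A) = 0 for all A ∈ [0, c), and w_b(A) → 0 as A → c⁻. -/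
/-- w_b(A) = b·(c−A), with b the positive quadratic-formula root,
satisfies α₁(c−A)w_b'(A) + α₂w_b(A) + α₃w_b'(A)w_b(A) + α₄(c−A) = 0 on [0,c), and
w_b(A) → 0 as A → c⁻. -/
theorem stmt_16 (α₁ α₂ α₃ α₄ c : ℝ) (hα₃ : 0 < α₃)
    (hdisc : 0 ≤ (α₂ - α₁) ^ 2 + 4 * α₃ * α₄) (hc : 0 < c) :
    let b : ℝ := ((α₂ - α₁) + Real.sqrt ((α₂ - α₁) ^ 2 + 4 * α₃ * α₄)) / (2 * α₃)
    let wb : ℝ → ℝ := fun A => b * (c - A)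
    (∀ A : ℝ, 0 ≤ A → A < c →
      α₁ * (c - A) * deriv wb A + α₂ * wb A + α₃ * deriv wb A * wb A + α₄ * (c - A) = 0) ∧
    Filter.Tendsto wb (nhdsWithin c (Set.Iio c)) (nhds 0) := by
  intro b wb
  have hder : ∀ A, deriv wb A = -b := fun A => by
    have h : HasDerivAt wb (b * (-1)) A := ((hasDerivAt_id A).const_sub c).const_mul b
    rw [h.deriv, mul_neg_one]
  -- `b` is the larger root of the characteristic quadratic of the ansatz `A ↦ b * (c - A)`.
  have hquad : α₃ * b ^ 2 - (α₂ - α₁) * b - α₄ = 0 := by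
    have hb : 2 * α₃ * b = (α₂ - α₁) + Real.sqrt ((α₂ - α₁) ^ 2 + 4 * α₃ * α₄) :=
      mul_div_cancel₀ _ (by positivity)
    have hs := Real.sq_sqrt hdisc
    rw [← sub_eq_iff_eq_add'.mpr hb] at hs
    have h4 : 4 * α₃ * (α₃ * b ^ 2 - (α₂ - α₁) * b - α₄) = 0 := by linear_combination hs
    exact (mul_eq_zero.mp h4).resolve_left (by positivity)
  refine ⟨fun A _ _ => ?_, ?_⟩
  · rw [hder]
    change α₁ * (c - A) * -b + α₂ * (b * (c - A)) + α₃ * -b * (b * (c - A)) + α₄ * (c - A) = 0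
    linear_combination -(c - A) * hquad
  · have hcont : Continuous wb := continuous_const.mul (continuous_const.sub continuous_id)
    have h0 : wb c = 0 := by simp [wb]
    rw [← h0]
    exact hcont.continuousWithinAt
end

section
/- Let r > 0, λ > 0, p ∈ (0,1], B₁ > 1, B₂ < 0, and suppose x > 1 satisfies (λ/(r(r+λ))) · (((1−B₂)/(B₁−B₂))·x^(B₁−1) + ((B₁−1)/(B₁−B₂))·x^(B₂−1)) = 1/r − (1−p)/(r+λ). Then λ/(λ + p·r) = (B₁−B₂)·x^(1−B₁)·x^(1−B₂) / ((B₁−1)·x^(1−B₁) + (1−B₂)·x^(1−B₂)). -/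
/-!
Put `a = x ^ (B₁ - 1)` and `b = x ^ (B₂ - 1)`. Clearing denominators, the hypothesis says
`lam * ((1 - B₂) * a + (B₁ - 1) * b) = (lam + p * r) * (B₁ - B₂)`. Since `x ^ (1 - B₁) = a⁻¹` and
`x ^ (1 - B₂) = b⁻¹`, multiplying numerator and denominator of the right-hand side of the conclusion
by `a * b` turns it into `(B₁ - B₂) / ((1 - B₂) * a + (B₁ - 1) * b)`, so the two are equivalent.
-/

/-- Identity (app11): if x > 1 satisfies equation (iiix), then
λ/(λ + p·r) = (B₁−B₂)·x^(1−B₁)·x^(1−B₂) / ((B₁−1)·x^(1−B₁) + (1−B₂)·x^(1−B₂)). -/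
theorem stmt_17 (r lam p B₁ B₂ x : ℝ) (hr : 0 < r) (hlam : 0 < lam)
    (hp0 : 0 < p) (hp1 : p ≤ 1) (hB₁ : 1 < B₁) (hB₂ : B₂ < 0) (hx : 1 < x)
    (heq : (lam / (r * (r + lam))) *
      (((1 - B₂) / (B₁ - B₂)) * x ^ (B₁ - 1) + ((B₁ - 1) / (B₁ - B₂)) * x ^ (B₂ - 1))
      = 1 / r - (1 - p) / (r + lam)) :
    lam / (lam + p * r)
      = (B₁ - B₂) * x ^ (1 - B₁) * x ^ (1 - B₂) /
          ((B₁ - 1) * x ^ (1 - B₁) + (1 - B₂) * x ^ (1 - B₂)) := by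
  have hx0 : 0 < x := by linarith
  have ha : 0 < x ^ (B₁ - 1) := Real.rpow_pos_of_pos hx0 _
  have hb : 0 < x ^ (B₂ - 1) := Real.rpow_pos_of_pos hx0 _
  have e1 : x ^ (1 - B₁) = (x ^ (B₁ - 1))⁻¹ := by
    rw [← Real.rpow_neg hx0.le, neg_sub]
  have e2 : x ^ (1 - B₂) = (x ^ (B₂ - 1))⁻¹ := by
    rw [← Real.rpow_neg hx0.le, neg_sub]
  rw [e1, e2]
  generalize x ^ (B₁ - 1) = a at *
  generalize x ^ (B₂ - 1) = b at *
  have hD : B₁ - B₂ ≠ 0 := by linarith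
  have hs : r + lam ≠ 0 := by positivity
  have h1 : 0 < B₁ - 1 := by linarith
  have h2 : 0 < 1 - B₂ := by linarith
  have hlin : lam * ((1 - B₂) * a + (B₁ - 1) * b) = (lam + p * r) * (B₁ - B₂) := by
    field_simp at heq
    linear_combination heq
  have hden : (B₁ - B₂) * a⁻¹ * b⁻¹ / ((B₁ - 1) * a⁻¹ + (1 - B₂) * b⁻¹)
      = (B₁ - B₂) / ((1 - B₂) * a + (B₁ - 1) * b) := by
    rw [div_eq_div_iff (by positivity) (by positivity)]
    field_simp
    ring
  rw [hden, div_eq_div_iff (by positivity) (by positivity)]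
  linear_combination hlin
end

section
/- Let r > 0, λ > 0, p ∈ (0,1], B₁ > 1, B₂ < 0, and let x > 1 satisfy λ·h(x) = λ + p·r, where h(z) = ((1−B₂)·z^(B₁−1) + (B₁−1)·z^(B₂−1))/(B₁−B₂). Define α₁ = −(1/r)·((B₁−1)(1−x^(1−B₂)) + (1−B₂)(1−x^(1−B₁))); α₂ = (B₁−1)·((λ/(r(r+λ)))·((B₁−1)B₂/(B₁−B₂))·(x^(B₂−B₁)−1) + (1/r)(1−x^(1−B₁))) + (1−B₂)·((λ/(r(r+λ)))·(B₁(1−B₂)/(B₁−B₂))·(x^(B₁−B₂)−1) + (1/r)(1−x^(1−B₂))); α₃ = B₁ − B₂; α₄ = −(1/r)·((B₁−1)·((λ/(r(r+λ)))·((B₁−1)B₂/(B₁−B₂))·(x^(B₂−B₁)−1) + (1/r)(1−x^(1−B₁)))·(1−x^(1−B₂)) + (1−B₂)·((λ/(r(r+λ)))·(B₁(1−B₂)/(B₁−B₂))·(x^(B₁−B₂)−1) + (1/r)(1−x^(1−B₂)))·(1−x^(1−B₁))). Assume (α₂−α₁)² + 4α₃α₄ ≥ 0 and set b = ((α₂−α₁)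 + √((α₂−α₁)² + 4α₃α₄))/(2α₃). Then b ≥ p/(λ + p·r). -/
/-!
The slope `b` is the larger root of `Q(b) = α₃ b² - (α₂ - α₁) b - α₄`, so it suffices that
`Q(q) ≤ 0` at `q = p / (lam + p r)`. With `m = B₁ - 1`, `n = 1 - B₂`, `u = x ^ m > 1`,
`v = x ^ (-n) < 1`, and `E`, `F` the two brackets occurring in `α₂`, this quadratic splits as
`Q(b) = m (b - E) (b - (1 - 1/v)/r) + n (b - F) (b - (1 - 1/u)/r)`.
The equation for `x` says `r q = 1 - 1/h` with `h = (n u + m v)/(m + n)`, whence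
`Q(q) = m n (u - v) / (r (m + n) h u v) * (q (u - v) - (E u - F v))`.
Finally `E u - F v = (u - v)/(r + lam)`, so `Q(q) ≤ 0` amounts to `q ≤ 1/(r + lam)`,
which is `p ≤ 1`.
-/

/-- A point where an upward parabola is nonpositive lies below its larger root. -/
lemma le_larger_root {a s c q : ℝ} (ha : 0 < a) (h : a * q ^ 2 - s * q - c ≤ 0) :
    q ≤ (s + Real.sqrt (s ^ 2 + 4 * a * c)) / (2 * a) := by
  rw [le_div_iff₀ (by positivity)]
  have h1 : (2 * a * q - s) ^ 2 ≤ s ^ 2 + 4 * a * c := by nlinarith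
  have h2 := Real.le_sqrt_of_sq_le h1
  linarith

/-- The identity `E u - F v = (u - v)/(r + lam)` for the two brackets of `α₂`. -/
lemma bracket_identity {r lam m n u v : ℝ} (hr : 0 < r) (hlam : 0 < lam) (hm : 0 < m)
    (hn : 0 < n) (hu : 0 < u) (hv : 0 < v) :
    (lam / (r * (r + lam)) * (m * (1 - n) / (m + n)) * (v * u⁻¹ - 1) + 1 / r * (1 - u⁻¹)) * u
      - (lam / (r * (r + lam)) * ((m + 1) * n / (m + n)) * (u * v⁻¹ - 1)
          + 1 / r * (1 - v⁻¹)) * v = (u - v) / (r + lam) := by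
  have h1 : r + lam ≠ 0 := by positivity
  have h2 : m + n ≠ 0 := by positivity
  field_simp
  ring

/-- Nonpositivity at `q = (1 - 1/h)/r` of the split quadratic. -/
lemma split_quadratic_nonpos {r m n u v h q E F : ℝ} (hr : 0 < r) (hm : 0 < m) (hn : 0 < n)
    (hv : 0 < v) (hvu : v < u) (hh : h = (n * u + m * v) / (m + n)) (hq : q = (1 - h⁻¹) / r)
    (hEF : q * (u - v) ≤ E * u - F * v) :
    m * (q - E) * (q - 1 / r * (1 - v⁻¹)) + n * (q - F) * (q - 1 / r * (1 - u⁻¹)) ≤ 0 := by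
  have hu : 0 < u := hv.trans hvu
  have hh0 : 0 < h := by rw [hh]; positivity
  have hR : q - 1 / r * (1 - v⁻¹) = n * (u - v) / (r * (m + n) * h * v) := by
    have : v⁻¹ - h⁻¹ = n * (u - v) / ((m + n) * h * v) := by
      rw [inv_sub_inv hv.ne' hh0.ne', div_eq_div_iff (by positivity) (by positivity)]
      have : h * (m + n) = n * u + m * v := by rw [hh]; field_simp
      linear_combination (h * v) * this
    calc q - 1 / r * (1 - v⁻¹) = (v⁻¹ - h⁻¹) / r := by rw [hq]; ring
      _ = _ := by rw [this, div_div]; ring_nf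
  have hP : q - 1 / r * (1 - u⁻¹) = -(m * (u - v) / (r * (m + n) * h * u)) := by
    have : u⁻¹ - h⁻¹ = -(m * (u - v)) / ((m + n) * h * u) := by
      rw [inv_sub_inv hu.ne' hh0.ne', div_eq_div_iff (by positivity) (by positivity)]
      have : h * (m + n) = n * u + m * v := by rw [hh]; field_simp
      linear_combination (h * u) * this
    calc q - 1 / r * (1 - u⁻¹) = (u⁻¹ - h⁻¹) / r := by rw [hq]; ring
      _ = _ := by rw [this, div_div]; ring_nf
  have key : m * (q - E) * (q - 1 / r * (1 - v⁻¹)) + n * (q - F) * (q - 1 / r * (1 - u⁻¹))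
      = m * n * (u - v) / (r * (m + n) * h * u * v) * (q * (u - v) - (E * u - F * v)) := by
    rw [hR, hP]
    have h2 : m + n ≠ 0 := by positivity
    field_simp
    ring
  rw [key]
  have huv : 0 < u - v := sub_pos.2 hvu
  exact mul_nonpos_of_nonneg_of_nonpos (by positivity) (by linarith)

/-- With the constants α₁,…,α₄ of equation (eq:alpha) and b the slope of
the linear purchase boundary, one has b ≥ p/(λ + p·r). -/
theorem stmt_18 (r lam p B₁ B₂ x : ℝ) (hr : 0 < r) (hlam : 0 < lam)
    (hp0 : 0 < p) (hp1 : p ≤ 1) (hB₁ : 1 < B₁) (hB₂ : B₂ < 0) (hx : 1 < x)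
    (hhx : lam * (((1 - B₂) * x ^ (B₁ - 1) + (B₁ - 1) * x ^ (B₂ - 1)) / (B₁ - B₂))
      = lam + p * r) :
    let α₁ : ℝ := -(1 / r) * ((B₁ - 1) * (1 - x ^ (1 - B₂)) + (1 - B₂) * (1 - x ^ (1 - B₁)))
    let α₂ : ℝ :=
      (B₁ - 1) * ((lam / (r * (r + lam))) * ((B₁ - 1) * B₂ / (B₁ - B₂)) * (x ^ (B₂ - B₁) - 1)
          + (1 / r) * (1 - x ^ (1 - B₁)))
        + (1 - B₂) * ((lam / (r * (r + lam))) * (B₁ * (1 - B₂) / (B₁ - B₂)) * (x ^ (B₁ - B₂) - 1)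
          + (1 / r) * (1 - x ^ (1 - B₂)))
    let α₃ : ℝ := B₁ - B₂
    let α₄ : ℝ :=
      -(1 / r) *
        ((B₁ - 1) * ((lam / (r * (r + lam))) * ((B₁ - 1) * B₂ / (B₁ - B₂)) * (x ^ (B₂ - B₁) - 1)
            + (1 / r) * (1 - x ^ (1 - B₁))) * (1 - x ^ (1 - B₂))
          + (1 - B₂) * ((lam / (r * (r + lam))) * (B₁ * (1 - B₂) / (B₁ - B₂)) * (x ^ (B₁ - B₂) - 1)
            + (1 / r) * (1 - x ^ (1 - B₂))) * (1 - x ^ (1 - B₁)))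
    0 ≤ (α₂ - α₁) ^ 2 + 4 * α₃ * α₄ →
      p / (lam + p * r)
        ≤ ((α₂ - α₁) + Real.sqrt ((α₂ - α₁) ^ 2 + 4 * α₃ * α₄)) / (2 * α₃) := by
  intro α₁ α₂ α₃ α₄ hdisc
  have hx0 : 0 < x := by linarith
  have hm : 0 < B₁ - 1 := by linarith
  have hn : 0 < 1 - B₂ := by linarith
  have hmn : B₁ - B₂ = (B₁ - 1) + (1 - B₂) := by ring
  have e1 : x ^ (1 - B₁) = (x ^ (B₁ - 1))⁻¹ := by
    rw [← Real.rpow_neg hx0.le]; congr 1; ring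
  have e2 : x ^ (1 - B₂) = (x ^ (B₂ - 1))⁻¹ := by
    rw [← Real.rpow_neg hx0.le]; congr 1; ring
  have e3 : x ^ (B₂ - B₁) = x ^ (B₂ - 1) * (x ^ (B₁ - 1))⁻¹ := by
    rw [← Real.rpow_neg hx0.le, ← Real.rpow_add hx0]; congr 1; ring
  have e4 : x ^ (B₁ - B₂) = x ^ (B₁ - 1) * (x ^ (B₂ - 1))⁻¹ := by
    rw [← Real.rpow_neg hx0.le, ← Real.rpow_add hx0]; congr 1; ring
  have hv : 0 < x ^ (B₂ - 1) := Real.rpow_pos_of_pos hx0 _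
  have hvu : x ^ (B₂ - 1) < x ^ (B₁ - 1) := Real.rpow_lt_rpow_of_exponent_lt hx (by linarith)
  simp only [α₁, α₂, α₃, α₄, e1, e2, e3, e4]
  clear hdisc α₁ α₂ α₃ α₄ e1 e2 e3 e4
  generalize x ^ (B₂ - 1) = v at *
  generalize x ^ (B₁ - 1) = u at *
  apply le_larger_root (by linarith)
  have hD : 0 < lam + p * r := by positivity
  have hq : p / (lam + p * r)
      = (1 - (((1 - B₂) * u + (B₁ - 1) * v) / (B₁ - B₂))⁻¹) / r := by
    have hinv : (((1 - B₂) * u + (B₁ - 1) * v) / (B₁ - B₂))⁻¹ = lam / (lam + p * r) := by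
      rw [← hhx, ← div_div, div_self hlam.ne', one_div]
    rw [hinv]
    field_simp
    ring
  have hle : p / (lam + p * r) ≤ 1 / (r + lam) := by
    rw [div_le_div_iff₀ hD (by positivity)]
    nlinarith
  have hEF := bracket_identity hr hlam hm hn (hv.trans hvu) hv
  have hle' : p / (lam + p * r) * (u - v) ≤ (u - v) / (r + lam) := by
    calc _ ≤ 1 / (r + lam) * (u - v) := mul_le_mul_of_nonneg_right hle (by linarith)
      _ = _ := by ring
  rw [← hEF] at hle'
  have main := split_quadratic_nonpos hr hm hn hv hvu (by rw [hmn]) hq hle'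
  refine le_of_eq_of_le ?_ main
  have a1 : (1 : ℝ) - (1 - B₂) = B₂ := by ring
  have a2 : B₁ - 1 + 1 = B₁ := by ring
  rw [← hmn, a1, a2]
  ring
end
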